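/- The function PA(q) extends analytically to the slit disc D₀ := { q ∈ ℂ : |q| < 55/100 and q ∉ [1/2, 55/100] }, and for every q ∈ D₀ it admits the convergent representation PA(q) = C(q) - A(q) · ((v(q);q)_∞/(q u(q);q)_∞) · [ q²/(1-q)² + ∑_{ν=1}^∞ d_ν(q) · q^{ν+2}/(1-2q+q^{ν+2}) ]. -/

import Mathlib

open Complex Filter Asymptotics Topology

noncomputable section

/-- finite q-Pochhammer symbol `(x;q)_n` -/
def qPF (x q : ℂ) (n : ℕ) : ℂ := ∏ i ∈ Finset.range n, (1 - x * q ^ i)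

/-- infinite q-Pochhammer symbol `(x;q)_∞` -/
def qPI (x q : ℂ) : ℂ := ∏' i : ℕ, (1 - x * q ^ i)

def uF (q : ℂ) : ℂ := q / (1 - q)
def vF (q : ℂ) : ℂ := (1 - q + q ^ 2) / (1 - q)
def aF (q : ℂ) : ℂ := q ^ 2 / (1 - q + q ^ 2)
def AF (q : ℂ) : ℂ := 2 * q * (1 - q) ^ 2 / (1 - 2 * q) ^ 2
def CF (q : ℂ) : ℂ := 2 * q * (3 - 10 * q + 9 * q ^ 2 - q ^ 3) / ((1 - q) * (1 - 2 * q) ^ 2)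
def DF (q : ℂ) : ℂ := CF q - (q ^ 2 / (1 - q) ^ 2) * AF q * qPI (vF q) q / qPI (aF q * vF q) q

/-- the `m`-th term (for `m ≥ 1`) of the explicit series for `PA(q)` -/
def PAterm (q : ℂ) (m : ℕ) : ℂ :=
  (-1) ^ m * q ^ (2 * m) / ((1 - 2 * q) ^ m * (1 - q - q ^ (m + 1))) *
    ∏ k ∈ Finset.Icc 1 (m - 1),
      ((1 - q - q ^ k + q ^ (k + 1) - q ^ (k + 2)) / (1 - q - q ^ (k + 1)))

/-- the explicit convergent series defining `PA(q)` for small `q` -/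
def PAseries (q : ℂ) : ℂ :=
  (-2 * q ^ 3 * (1 - q) ^ 2 / (1 - 2 * q) ^ 2) * (∑' m : ℕ, PAterm q (m + 1))
    + 2 * q * (3 - 10 * q + 9 * q ^ 2 - q ^ 3) / ((1 - 2 * q) ^ 2 * (1 - q))

/-- the function `z ↦ (q u(q) z; q)_∞ / (v(q) z; q)_∞` -/
def dFun (q : ℂ) : ℂ → ℂ := fun z => qPI (q * uF q * z) q / qPI (vF q * z) q

/-- `d_ν(q)`: the `ν`-th Taylor coefficient at `z = 0` of `dFun q` -/
def dCoef (q : ℂ) (ν : ℕ) : ℂ := iteratedDeriv ν (dFun q) 0 / (Nat.factorial ν)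

/-- the slit disc `D₀ = {q : |q| < 55/100, q ∉ [1/2, 55/100]}` -/
def slitDisc : Set ℂ :=
  {q : ℂ | ‖q‖ < 55 / 100 ∧ ¬∃ x : ℝ, 1 / 2 ≤ x ∧ x ≤ 55 / 100 ∧ q = (x : ℂ)}


/-- explicit coefficients -/
def dD (q : ℂ) (n : ℕ) : ℂ :=
  ∏ i ∈ Finset.range n, ((vF q - q * uF q * q ^ i) / (1 - q ^ (i + 1)))

def bB (i : ℕ) : ℝ := (92 / 100 + 37 / 100 * (55 / 100 : ℝ) ^ i) / (1 - (55 / 100 : ℝ) ^ (i + 1))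

def mM (n : ℕ) : ℝ := ∏ i ∈ Finset.range n, bB i

lemma aux_pow_lt (i : ℕ) : (55 / 100 : ℝ) ^ (i + 1) < 1 :=
  pow_lt_one₀ (by norm_num) (by norm_num) (by omega)

lemma bB_pos (i : ℕ) : 0 < bB i := by
  have := aux_pow_lt i
  unfold bB
  apply div_pos
  · positivity
  · linarith

lemma mM_pos (n : ℕ) : 0 < mM n := Finset.prod_pos fun i _ => bB_pos i

lemma summable_mM : Summable mM := by
  apply summable_of_ratio_test_tendsto_lt_one (l := 92 / 100) (by norm_num)
  · exact Eventually.of_forall fun n => (mM_pos n).ne'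
  · have h1 : ∀ n, ‖mM (n + 1)‖ / ‖mM n‖ = bB n := by
      intro n
      rw [Real.norm_of_nonneg (mM_pos _).le, Real.norm_of_nonneg (mM_pos _).le]
      have := mM_pos n
      have h2 : mM (n + 1) = mM n * bB n := Finset.prod_range_succ _ _
      rw [h2]; field_simp
    simp_rw [h1]
    have h0 : Tendsto (fun n : ℕ => (55 / 100 : ℝ) ^ n) atTop (𝓝 0) :=
      tendsto_pow_atTop_nhds_zero_of_lt_one (by norm_num) (by norm_num)
    have h3 := (tendsto_const_nhds (x := (92 / 100 : ℝ))).add (h0.const_mul (37 / 100))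
    have h4 := (tendsto_const_nhds (x := (1 : ℝ))).sub ((tendsto_add_atTop_iff_nat 1).2 h0)
    have h5 := h3.div h4 (by norm_num)
    simpa [bB, Pi.div_def] using h5

lemma one_sub_norm {q : ℂ} (hq : ‖q‖ < 55 / 100) : 45 / 100 ≤ ‖1 - q‖ := by
  have := norm_sub_norm_le (1 : ℂ) q
  rw [norm_one] at this
  linarith

lemma one_sub_ne {q : ℂ} (hq : ‖q‖ < 55 / 100) : 1 - q ≠ 0 := by
  have := one_sub_norm hq
  intro h
  rw [h, norm_zero] at this
  norm_num at this

lemma qu_norm {q : ℂ} (hq : ‖q‖ < 55 / 100) : ‖q * uF q‖ ≤ 6723 / 10000 := by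
  have h := one_sub_norm hq
  unfold uF
  rw [norm_mul, norm_div, ← mul_div_assoc, div_le_iff₀ (by linarith)]
  nlinarith [norm_nonneg q]

lemma v_eq {q : ℂ} (hq : ‖q‖ < 55 / 100) : vF q = 1 + q * uF q := by
  have h := one_sub_ne hq
  unfold vF uF
  field_simp

lemma v_norm {q : ℂ} (hq : ‖q‖ < 55 / 100) : ‖vF q‖ ≤ 16723 / 10000 := by
  rw [v_eq hq]
  have := norm_add_le 1 (q * uF q)
  rw [norm_one] at this
  linarith [qu_norm hq]

lemma one_sub_pow_norm {q : ℂ} (hq : ‖q‖ < 55 / 100) (i : ℕ) :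
    1 - (55 / 100 : ℝ) ^ (i + 1) ≤ ‖1 - q ^ (i + 1)‖ := by
  have := norm_sub_norm_le (1 : ℂ) (q ^ (i + 1))
  rw [norm_one, norm_pow] at this
  have h2 : ‖q‖ ^ (i + 1) ≤ (55 / 100 : ℝ) ^ (i + 1) := by gcongr
  linarith

lemma one_sub_pow_ne {q : ℂ} (hq : ‖q‖ < 55 / 100) (i : ℕ) : 1 - q ^ (i + 1) ≠ 0 := by
  have := one_sub_pow_norm hq i
  have h2 := aux_pow_lt i
  intro h
  rw [h, norm_zero] at this
  linarith

lemma dD_bound {q : ℂ} (hq : ‖q‖ < 55 / 100) (n : ℕ) :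
    ‖dD q n‖ * (55 / 100 : ℝ) ^ n ≤ mM n := by
  unfold dD mM
  rw [norm_prod]
  have : (55 / 100 : ℝ) ^ n = ∏ i ∈ Finset.range n, (55 / 100 : ℝ) := by
    rw [Finset.prod_const, Finset.card_range]
  rw [this, ← Finset.prod_mul_distrib]
  apply Finset.prod_le_prod
  · intro i _; positivity
  · intro i _
    have h1 := one_sub_pow_norm hq i
    have h2 := aux_pow_lt i
    rw [norm_div, div_mul_eq_mul_div]
    unfold bB
    have h3 : ‖vF q - q * uF q * q ^ i‖ ≤ 16723 / 10000 + 6723 / 10000 * (55 / 100 : ℝ) ^ i := by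
      refine (norm_sub_le _ _).trans ?_
      rw [norm_mul _ (q ^ i), norm_pow]
      have := v_norm hq
      have := qu_norm hq
      gcongr
    have h4 : (0 : ℝ) < (55 / 100 : ℝ) ^ i := by positivity
    apply div_le_div₀
    · positivity
    · nlinarith
    · linarith
    · exact h1

lemma dD_term_bound {q z : ℂ} (hq : ‖q‖ < 55 / 100) (hz : ‖z‖ ≤ 55 / 100) (n : ℕ) :
    ‖dD q n * z ^ n‖ ≤ mM n := by
  rw [norm_mul, norm_pow]
  refine le_trans ?_ (dD_bound hq n)
  gcongr

lemma dD_summable {q z : ℂ} (hq : ‖q‖ < 55 / 100) (hz : ‖z‖ ≤ 55 / 100) :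
    Summable fun n => dD q n * z ^ n :=
  Summable.of_norm_bounded summable_mM (dD_term_bound hq hz)

def gG (q z : ℂ) : ℂ := ∑' n, dD q n * z ^ n

lemma dD_succ {q : ℂ} (hq : ‖q‖ < 55 / 100) (n : ℕ) :
    dD q (n + 1) * (1 - q ^ (n + 1)) = dD q n * (vF q - q * uF q * q ^ n) := by
  have := one_sub_pow_ne hq n
  unfold dD
  rw [Finset.prod_range_succ]
  field_simp

lemma gG_feq {q z : ℂ} (hq : ‖q‖ < 55 / 100) (hz : ‖z‖ ≤ 55 / 100) :
    (1 - vF q * z) * gG q z = (1 - q * uF q * z) * gG q (q * z) := by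
  have hz' : ‖q * z‖ ≤ 55 / 100 := by
    rw [norm_mul]; nlinarith [norm_nonneg q, norm_nonneg z]
  have s1 := dD_summable hq hz
  have s2 := dD_summable hq hz'
  have e1 : gG q z = dD q 0 + ∑' n, dD q (n + 1) * z ^ (n + 1) := by
    unfold gG; rw [s1.tsum_eq_zero_add]; simp
  have e2 : gG q (q * z) = dD q 0 + ∑' n, dD q (n + 1) * (q * z) ^ (n + 1) := by
    unfold gG; rw [s2.tsum_eq_zero_add]; simp
  have s1' := (summable_nat_add_iff 1).2 s1
  have s2' := (summable_nat_add_iff 1).2 s2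
  have e3 : gG q z - gG q (q * z) = vF q * z * gG q z - q * uF q * z * gG q (q * z) := by
    rw [e1, e2, add_sub_add_left_eq_sub, ← s1'.tsum_sub s2', ← e1, ← e2]
    unfold gG
    rw [← tsum_mul_left, ← tsum_mul_left, ← (s1.mul_left _).tsum_sub (s2.mul_left _)]
    apply tsum_congr
    intro n
    have := dD_succ hq n
    rw [mul_pow, mul_pow, pow_succ z n]
    linear_combination z ^ n * z * this
  linear_combination e3

lemma qPI_summable (x : ℂ) {q : ℂ} (hq : ‖q‖ < 1) : Summable fun i : ℕ => ‖-(x * q ^ i)‖ := by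
  simp only [norm_neg, norm_mul, norm_pow]
  exact (summable_geometric_of_lt_one (norm_nonneg _) hq).mul_left _

lemma qPI_multipliable (x : ℂ) {q : ℂ} (hq : ‖q‖ < 1) :
    Multipliable fun i : ℕ => 1 - x * q ^ i := by
  simpa [sub_eq_add_neg] using multipliable_one_add_of_summable (qPI_summable x hq)

lemma qPI_tendsto (x : ℂ) {q : ℂ} (hq : ‖q‖ < 1) :
    Tendsto (fun n => qPF x q n) atTop (𝓝 (qPI x q)) :=
  (qPI_multipliable x hq).tendsto_prod_tprod_nat

lemma qPI_ne_zero {x q : ℂ} (hq : ‖q‖ < 1) (hx : ‖x‖ < 1) : qPI x q ≠ 0 := by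
  have := tprod_one_add_ne_zero_of_summable (f := fun i : ℕ => -(x * q ^ i)) ?_ (qPI_summable x hq)
  · simpa [sub_eq_add_neg, qPI] using this
  · intro i h
    have h1 : x * q ^ i = 1 := by linear_combination -h
    have h2 : ‖x * q ^ i‖ < 1 := by
      rw [norm_mul, norm_pow]
      have : ‖q‖ ^ i ≤ 1 := pow_le_one₀ (norm_nonneg _) hq.le
      nlinarith [norm_nonneg x]
    rw [h1, norm_one] at h2
    exact lt_irrefl _ h2

lemma qPF_mul_qPI (x : ℂ) {q : ℂ} (hq : ‖q‖ < 1) (n : ℕ) :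
    qPF x q n * qPI (x * q ^ n) q = qPI x q := by
  have h1 : Tendsto (fun m => qPF x q n * qPF (x * q ^ n) q m) atTop
      (𝓝 (qPF x q n * qPI (x * q ^ n) q)) := (qPI_tendsto _ hq).const_mul _
  have h2 := ((tendsto_add_atTop_iff_nat n).2 (qPI_tendsto x hq))
  refine tendsto_nhds_unique h1 (h2.congr fun m => ?_)
  unfold qPF
  rw [add_comm m n, Finset.prod_range_add]
  congr 1
  apply Finset.prod_congr rfl
  intro i _
  rw [pow_add]; ring

lemma gG_iter {q z : ℂ} (hq : ‖q‖ < 55 / 100) (hz : ‖z‖ ≤ 55 / 100) (n : ℕ) :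
    qPF (vF q * z) q n * gG q z = qPF (q * uF q * z) q n * gG q (z * q ^ n) := by
  induction n with
  | zero => simp [qPF]
  | succ n ih =>
    have hz' : ‖z * q ^ n‖ ≤ 55 / 100 := by
      rw [norm_mul, norm_pow]
      have : ‖q‖ ^ n ≤ 1 := pow_le_one₀ (norm_nonneg _) (by linarith)
      nlinarith [norm_nonneg z]
    have := gG_feq hq hz'
    unfold qPF at *
    rw [Finset.prod_range_succ, Finset.prod_range_succ]
    have e : q * (z * q ^ n) = z * q ^ (n + 1) := by ring
    rw [e] at this
    linear_combination (1 - vF q * z * q ^ n) * ih +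
      (∏ i ∈ Finset.range n, (1 - q * uF q * z * q ^ i)) * this

lemma gG_zero (q : ℂ) : gG q 0 = 1 := by
  unfold gG
  rw [tsum_eq_single 0]
  · simp [dD]
  · intro n hn; simp [hn]

lemma gG_continuousOn {q : ℂ} (hq : ‖q‖ < 55 / 100) :
    ContinuousOn (gG q) (Metric.closedBall 0 (55 / 100)) := by
  unfold gG
  apply continuousOn_tsum (u := mM) _ summable_mM
  · intro n x hx
    exact dD_term_bound hq (by simpa using hx) n
  · intro n; fun_prop

lemma gG_eq {q z : ℂ} (hq : ‖q‖ < 55 / 100) (hz : ‖z‖ ≤ 55 / 100) :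
    qPI (vF q * z) q * gG q z = qPI (q * uF q * z) q := by
  have hq1 : ‖q‖ < 1 := by linarith
  have h1 := (qPI_tendsto (vF q * z) hq1).mul_const (gG q z)
  have h0 : ContinuousAt (gG q) 0 :=
    (gG_continuousOn hq).continuousAt (Metric.closedBall_mem_nhds _ (by norm_num))
  have h3 : Tendsto (fun n : ℕ => z * q ^ n) atTop (𝓝 0) := by
    simpa using (tendsto_pow_atTop_nhds_zero_of_norm_lt_one hq1).const_mul z
  have h2 := (qPI_tendsto (q * uF q * z) hq1).mul (h0.tendsto.comp h3)
  rw [gG_zero, mul_one] at h2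
  refine tendsto_nhds_unique h1 (h2.congr fun n => ?_)
  exact (gG_iter hq hz n).symm

lemma vz_lt {q z : ℂ} (hq : ‖q‖ < 55 / 100) (hz : ‖z‖ ≤ 55 / 100) : ‖vF q * z‖ < 1 := by
  rw [norm_mul]
  have := v_norm hq
  nlinarith [norm_nonneg z, norm_nonneg (vF q)]

lemma dFun_eq {q z : ℂ} (hq : ‖q‖ < 55 / 100) (hz : ‖z‖ ≤ 55 / 100) :
    dFun q z = gG q z := by
  have := qPI_ne_zero (q := q) (by linarith) (vz_lt hq hz)
  unfold dFun
  rw [← gG_eq hq hz]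
  field_simp

lemma dCoef_eq {q : ℂ} (hq : ‖q‖ < 55 / 100) (n : ℕ) : dCoef q n = dD q n := by
  have h1 : HasFPowerSeriesAt (dFun q) (FormalMultilinearSeries.ofScalars ℂ (dD q)) 0 := by
    rw [hasFPowerSeriesAt_iff]
    filter_upwards [Metric.closedBall_mem_nhds (0 : ℂ) (show (0 : ℝ) < 55 / 100 by norm_num)]
      with z hz
    have hz' : ‖z‖ ≤ 55 / 100 := by simpa using hz
    rw [zero_add, dFun_eq hq hz']
    have := (dD_summable hq hz').hasSum
    simpa [gG, FormalMultilinearSeries.coeff_ofScalars, mul_comm] using this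
  have h2 := AnalyticAt.hasFPowerSeriesAt h1.analyticAt
  have h3 := h2.eq_formalMultilinearSeries h1
  have h4 := congrArg (fun p => FormalMultilinearSeries.coeff p n) h3
  simpa [dCoef, FormalMultilinearSeries.coeff_ofScalars] using h4

lemma pow_sub_bound {q p : ℂ} (hq : ‖q‖ ≤ 55 / 100) (hp : ‖p‖ ≤ 55 / 100) (n : ℕ) :
    ‖q ^ (n + 3) - p ^ (n + 3)‖ ≤ ‖q - p‖ := by
  induction n with
  | zero =>
    have e : q ^ (0 + 3) - p ^ (0 + 3) = (q ^ 2 + q * p + p ^ 2) * (q - p) := by ring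
    rw [e, norm_mul]
    have h : ‖q ^ 2 + q * p + p ^ 2‖ ≤ 1 := by
      refine (norm_add₃_le).trans ?_
      rw [norm_mul, norm_pow, norm_pow]
      nlinarith [norm_nonneg q, norm_nonneg p]
    nlinarith [norm_nonneg (q - p)]
  | succ n ih =>
    have e : q ^ (n + 1 + 3) - p ^ (n + 1 + 3) =
      q * (q ^ (n + 3) - p ^ (n + 3)) + (q - p) * p ^ (n + 3) := by ring
    rw [e]
    refine (norm_add_le _ _).trans ?_
    rw [norm_mul, norm_mul, norm_pow]
    have h1 : ‖p‖ ^ (n + 3) ≤ (55 / 100 : ℝ) ^ 3 := by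
      calc ‖p‖ ^ (n + 3) ≤ (55 / 100 : ℝ) ^ (n + 3) := by gcongr
        _ ≤ _ := pow_le_pow_of_le_one (by norm_num) (by norm_num) (by omega)
    norm_num at h1
    have h2 : ‖q‖ * ‖q ^ (n + 3) - p ^ (n + 3)‖ ≤ 55 / 100 * ‖q - p‖ := by gcongr
    nlinarith [norm_nonneg (q - p)]

def GG (q : ℂ) : ℝ := max |q.im| ((1 - 2 * q.re) / 8)

lemma GG_cont : Continuous GG := by
  unfold GG; fun_prop

lemma F_bound {q : ℂ} (hq : ‖q‖ < 55 / 100) (n : ℕ) :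
    GG q ≤ ‖1 - 2 * q + q ^ (n + 3)‖ := by
  set F := 1 - 2 * q + q ^ (n + 3) with hF
  have him : |q.im| ≤ ‖F‖ := by
    have h1 := pow_sub_bound hq.le (p := (starRingEnd ℂ) q) (by simpa using hq.le) n
    have h2 : (starRingEnd ℂ) F = 1 - 2 * (starRingEnd ℂ) q + ((starRingEnd ℂ) q) ^ (n + 3) := by
      simp [hF, Complex.conj_ofNat]
    have h3 : 2 * (q - (starRingEnd ℂ) q) =
        (q ^ (n + 3) - ((starRingEnd ℂ) q) ^ (n + 3)) - (F - (starRingEnd ℂ) F) := by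
      rw [h2, hF]; ring
    have h4 : ‖q - (starRingEnd ℂ) q‖ = 2 * |q.im| := by
      rw [Complex.sub_conj]; simp
    have h5 := norm_sub_le (q ^ (n + 3) - ((starRingEnd ℂ) q) ^ (n + 3)) (F - (starRingEnd ℂ) F)
    have h6 := norm_sub_le F ((starRingEnd ℂ) F)
    rw [← h3, norm_mul, h4] at h5
    rw [h4] at h1
    rw [RCLike.norm_conj] at h6
    norm_num at h5
    linarith
  refine max_le him ?_
  have hre : |q.re| < 55 / 100 := (Complex.abs_re_le_norm q).trans_lt hq
  have h1 := pow_sub_bound hq.le (p := (q.re : ℂ)) (by simpa using hre.le) n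
  have h4 : ‖q - (q.re : ℂ)‖ = |q.im| := by
    have : q - (q.re : ℂ) = q.im * I := by
      apply Complex.ext <;> simp
    rw [this]; simp
  have h5 : ((1 - 2 * q.re + q.re ^ (n + 3) : ℝ) : ℂ) =
      F + 2 * (q - (q.re : ℂ)) - (q ^ (n + 3) - (q.re : ℂ) ^ (n + 3)) := by
    rw [hF]; push_cast; ring
  have h6 := congrArg norm h5
  have h7 := norm_sub_le (F + 2 * (q - (q.re : ℂ))) (q ^ (n + 3) - (q.re : ℂ) ^ (n + 3))
  have h8 := norm_add_le F (2 * (q - (q.re : ℂ)))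
  rw [norm_mul, h4] at h8
  rw [← h6] at h7
  rw [h4] at h1
  rw [Complex.norm_real] at h7
  norm_num at h8
  have h9 : 1 - 2 * q.re + q.re ^ (n + 3) ≤ 4 * ‖F‖ := by
    refine (le_abs_self _).trans ?_
    rw [Real.norm_eq_abs] at h7
    linarith
  have h10 : (1 - 2 * q.re) / 2 ≤ 1 - 2 * q.re + q.re ^ (n + 3) ∨ 1 - 2 * q.re < 0 := by
    rcases le_or_gt 0 q.re with h | h
    · rcases le_or_gt 0 (1 - 2 * q.re) with h' | h'
      · left
        have : 0 ≤ q.re ^ (n + 3) := by positivity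
        linarith
      · right; exact h'
    · left
      have : |q.re ^ (n + 3)| ≤ (55 / 100 : ℝ) ^ 3 := by
        rw [abs_pow]
        calc |q.re| ^ (n + 3) ≤ (55 / 100 : ℝ) ^ (n + 3) := by gcongr
          _ ≤ _ := pow_le_pow_of_le_one (by norm_num) (by norm_num) (by omega)
      have := (abs_le.1 this).1
      norm_num at this
      linarith
  rcases h10 with h | h
  · linarith
  · linarith [norm_nonneg F]

lemma slit_eq : slitDisc = {q : ℂ | ‖q‖ < 55 / 100 ∧ 0 < GG q} := by
  ext q
  simp only [slitDisc, Set.mem_ofPred_eq]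
  refine and_congr_right fun hq => ?_
  unfold GG
  rw [lt_max_iff, abs_pos]
  constructor
  · intro h
    by_contra hc
    push Not at hc
    apply h
    refine ⟨q.re, by linarith [hc.2], ?_, ?_⟩
    · exact ((le_abs_self _).trans (Complex.abs_re_le_norm q)).trans hq.le
    · apply Complex.ext <;> simp [hc.1]
  · rintro h ⟨x, h1, h2, rfl⟩
    simp at h
    linarith

lemma slit_open : IsOpen slitDisc := by
  rw [slit_eq]
  exact (isOpen_lt continuous_norm continuous_const).inter (isOpen_lt continuous_const GG_cont)

lemma term_bound {q : ℂ} (hq : ‖q‖ < 55 / 100) {c : ℝ} (hc : 0 < c) (hG : c ≤ GG q) (n : ℕ) :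
    ‖dD q (n + 1) * q ^ (n + 3) / (1 - 2 * q + q ^ (n + 3))‖ ≤ mM (n + 1) / c := by
  rw [norm_div]
  apply div_le_div₀ (mM_pos _).le _ hc (hG.trans (F_bound hq n))
  have := dD_term_bound hq hq.le (n + 1)
  have e : dD q (n + 1) * q ^ (n + 3) = dD q (n + 1) * q ^ (n + 1) * q ^ 2 := by ring
  rw [e, norm_mul, norm_pow]
  have : ‖q‖ ^ 2 ≤ 1 := pow_le_one₀ (norm_nonneg _) (by linarith)
  calc _ ≤ mM (n + 1) * 1 := by
        gcongr
        exact (mM_pos _).le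
    _ = _ := mul_one _

lemma summable_mM_div (c : ℝ) : Summable fun n => mM (n + 1) / c :=
  ((summable_nat_add_iff 1).2 summable_mM).div_const c

lemma term_summable {q : ℂ} (hq : q ∈ slitDisc) :
    Summable fun n : ℕ => ‖dD q (n + 1) * q ^ (n + 3) / (1 - 2 * q + q ^ (n + 3))‖ := by
  rw [slit_eq] at hq
  exact Summable.of_nonneg_of_le (fun _ => norm_nonneg _)
    (term_bound hq.1 hq.2 le_rfl) (summable_mM_div _)

lemma F_ne {q : ℂ} (hq : q ∈ slitDisc) (n : ℕ) : 1 - 2 * q + q ^ (n + 3) ≠ 0 := by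
  rw [slit_eq] at hq
  have := F_bound hq.1 n
  rw [← norm_pos_iff]
  exact hq.2.trans_le this

lemma two_ne {q : ℂ} (hq : q ∈ slitDisc) : 1 - 2 * q ≠ 0 := by
  intro h
  apply hq.2
  refine ⟨1 / 2, le_rfl, by norm_num, ?_⟩
  push_cast
  linear_combination (-1 / 2 : ℂ) * h

lemma uF_diff : DifferentiableOn ℂ uF {q : ℂ | ‖q‖ < 55 / 100} := by
  unfold uF
  exact DifferentiableOn.fun_div (by fun_prop) (by fun_prop) fun q hq => one_sub_ne hq

lemma vF_diff : DifferentiableOn ℂ vF {q : ℂ | ‖q‖ < 55 / 100} := by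
  unfold vF
  exact DifferentiableOn.fun_div (by fun_prop) (by fun_prop) fun q hq => one_sub_ne hq

lemma dD_diff (n : ℕ) : DifferentiableOn ℂ (fun q => dD q n) {q : ℂ | ‖q‖ < 55 / 100} := by
  unfold dD
  have := uF_diff
  have := vF_diff
  apply DifferentiableOn.fun_finsetProd
  intro i _
  exact DifferentiableOn.fun_div (by fun_prop) (by fun_prop) fun q hq => one_sub_pow_ne hq i

lemma sub_disc : slitDisc ⊆ {q : ℂ | ‖q‖ < 55 / 100} := fun _ h => h.1

lemma sum_diff : DifferentiableOn ℂ
    (fun q => ∑' n : ℕ, dD q (n + 1) * q ^ (n + 3) / (1 - 2 * q + q ^ (n + 3))) slitDisc := by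
  intro q₀ hq₀
  have hG : 0 < GG q₀ := by
    have := hq₀
    rw [slit_eq] at this
    exact this.2
  have hU : IsOpen (slitDisc ∩ {q | GG q₀ / 2 < GG q}) :=
    slit_open.inter (isOpen_lt continuous_const GG_cont)
  have hm : q₀ ∈ slitDisc ∩ {q | GG q₀ / 2 < GG q} := ⟨hq₀, by simp; linarith⟩
  have := differentiableOn_tsum_of_summable_norm (U := slitDisc ∩ {q | GG q₀ / 2 < GG q})
    (F := fun (n : ℕ) q => dD q (n + 1) * q ^ (n + 3) / (1 - 2 * q + q ^ (n + 3)))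
    (summable_mM_div (GG q₀ / 2)) ?_ hU ?_
  · exact (this.differentiableAt (hU.mem_nhds hm)).differentiableWithinAt
  · intro n
    have h1 : DifferentiableOn ℂ (fun q => dD q (n + 1)) (slitDisc ∩ {q | GG q₀ / 2 < GG q}) :=
      (dD_diff (n + 1)).mono fun q hq => sub_disc hq.1
    exact DifferentiableOn.fun_div (by fun_prop) (by fun_prop) fun q hq => F_ne hq.1 n
  · intro n q hq
    exact term_bound hq.1.1 (by linarith) (le_of_lt hq.2) n

lemma qPI_diff {x : ℂ → ℂ} (hx : DifferentiableOn ℂ x {q : ℂ | ‖q‖ < 55 / 100})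
    (hb : ∀ q : ℂ, ‖q‖ < 55 / 100 → ‖x q‖ ≤ 2) :
    DifferentiableOn ℂ (fun q => qPI (x q) q) {q : ℂ | ‖q‖ < 55 / 100} := by
  have ho : IsOpen {q : ℂ | ‖q‖ < 55 / 100} := isOpen_lt continuous_norm continuous_const
  have hs : Summable fun n : ℕ => 2 * (55 / 100 : ℝ) ^ n :=
    (summable_geometric_of_lt_one (by norm_num) (by norm_num)).mul_left _
  have hc := hx.continuousOn
  have h := hs.hasProdLocallyUniformlyOn_nat_one_add (f := fun n q => -(x q * q ^ n)) ho
    (Eventually.of_forall fun n q hq => by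
      have hq' : ‖q‖ < 55 / 100 := hq
      rw [norm_neg, norm_mul, norm_pow]
      have := hb q hq
      gcongr) (fun n => by fun_prop)
  have h2 := h.differentiableOn (Eventually.of_forall fun s => by
    simpa [Finset.prod_fn] using
      DifferentiableOn.finsetProd (fun _ _ ↦ by fun_prop)) ho
  simpa [qPI, sub_eq_add_neg] using h2

def fF (q : ℂ) : ℂ := CF q - AF q * (qPI (vF q) q / qPI (q * uF q) q) *
          (q ^ 2 / (1 - q) ^ 2 +
            ∑' n : ℕ, dD q (n + 1) * q ^ (n + 3) / (1 - 2 * q + q ^ (n + 3)))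

lemma qu_ne {q : ℂ} (hq : ‖q‖ < 55 / 100) : qPI (q * uF q) q ≠ 0 :=
  qPI_ne_zero (by linarith) (by linarith [qu_norm hq])

lemma fF_diff : DifferentiableOn ℂ fF slitDisc := by
  have h1 := sum_diff
  have hu := uF_diff
  have h2 : DifferentiableOn ℂ (fun q => qPI (vF q) q) slitDisc :=
    (qPI_diff vF_diff fun q hq => by linarith [v_norm hq]).mono sub_disc
  have h3 : DifferentiableOn ℂ (fun q => qPI (q * uF q) q) slitDisc :=
    (qPI_diff (x := fun q => q * uF q) (by fun_prop)
      fun q hq => by linarith [qu_norm hq]).mono sub_disc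
  have h4 : DifferentiableOn ℂ (fun q => qPI (vF q) q / qPI (q * uF q) q) slitDisc :=
    h2.fun_div h3 fun q hq => qu_ne hq.1
  have h5 : DifferentiableOn ℂ AF slitDisc := by
    unfold AF
    exact DifferentiableOn.fun_div (by fun_prop) (by fun_prop) fun q hq => pow_ne_zero _ (two_ne hq)
  have h6 : DifferentiableOn ℂ CF slitDisc := by
    unfold CF
    exact DifferentiableOn.fun_div (by fun_prop) (by fun_prop) fun q hq =>
      mul_ne_zero (one_sub_ne hq.1) (pow_ne_zero _ (two_ne hq))
  have h7 : DifferentiableOn ℂ (fun q : ℂ => q ^ 2 / (1 - q) ^ 2) slitDisc :=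
    DifferentiableOn.fun_div (by fun_prop) (by fun_prop) fun q hq =>
      pow_ne_zero _ (one_sub_ne hq.1)
  unfold fF
  exact h6.fun_sub ((h5.fun_mul h4).fun_mul (h7.fun_add h1))

lemma prod_Icc_one (f : ℕ → ℂ) (m : ℕ) :
    ∏ k ∈ Finset.Icc 1 m, f k = ∏ i ∈ Finset.range m, f (i + 1) := by
  induction m with
  | zero => simp
  | succ m ih => rw [Finset.prod_Icc_succ_top (by omega), ih, Finset.prod_range_succ]

def tT (q : ℂ) : ℂ := -q ^ 2 / (1 - 2 * q)

lemma small_slit {q : ℂ} (hq : ‖q‖ < 1 / 10) : q ∈ slitDisc := by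
  refine ⟨by linarith, ?_⟩
  rintro ⟨x, h1, _, rfl⟩
  rw [Complex.norm_real] at hq
  have := (le_abs_self x).trans_lt hq
  linarith

lemma PAterm_eq {q : ℂ} (hq : ‖q‖ < 55 / 100) (m : ℕ) :
    PAterm q (m + 1) = 1 / (1 - q) * (tT q ^ (m + 1) *
      (qPF (vF q * q) q m / qPF (uF q * q) q (m + 1))) := by
  have h1 := one_sub_ne hq
  unfold PAterm
  rw [Nat.add_sub_cancel, prod_Icc_one]
  have e1 : ∀ i : ℕ, (1 - q - q ^ (i + 1) + q ^ (i + 1 + 1) - q ^ (i + 1 + 2)) /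
      (1 - q - q ^ (i + 1 + 1)) = (1 - vF q * q * q ^ i) / (1 - uF q * q * q ^ i) := by
    intro i
    rw [← mul_div_mul_left _ (1 - uF q * q * q ^ i) h1]
    unfold uF vF
    congr 1 <;> field_simp <;> ring
  have e2 : 1 - q - q ^ (m + 1 + 1) = (1 - q) * (1 - uF q * q * q ^ m) := by
    unfold uF
    field_simp
    ring
  have e3 : tT q ^ (m + 1) = (-1) ^ (m + 1) * q ^ (2 * (m + 1)) / (1 - 2 * q) ^ (m + 1) := by
    unfold tT
    rw [div_pow, neg_pow, pow_mul]
  rw [e2, e3]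
  simp_rw [e1]
  unfold qPF
  rw [Finset.prod_div_distrib, Finset.prod_range_succ _ m]
  simp only [div_eq_mul_inv, mul_inv]
  ring

lemma uq_ne {q : ℂ} (hq : ‖q‖ < 55 / 100) : qPI (uF q * q) q ≠ 0 := by
  rw [mul_comm]; exact qu_ne hq

lemma quot_eq {q : ℂ} (hq : ‖q‖ < 55 / 100) (m : ℕ) :
    qPF (vF q * q) q m / qPF (uF q * q) q (m + 1) =
      qPI (vF q * q) q / qPI (uF q * q) q * gG q (q ^ (m + 1)) := by
  have hq1 : ‖q‖ < 1 := by linarith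
  have hz : ‖q ^ (m + 1)‖ ≤ 55 / 100 := by
    rw [norm_pow, pow_succ]
    have : ‖q‖ ^ m ≤ 1 := pow_le_one₀ (norm_nonneg _) hq1.le
    nlinarith [norm_nonneg q]
  have a1 := qPF_mul_qPI (vF q * q) hq1 m
  have a2 := qPF_mul_qPI (uF q * q) hq1 (m + 1)
  have a3 := gG_eq hq hz
  have r1 : vF q * q * q ^ m = vF q * q ^ (m + 1) := by ring
  have r2 : uF q * q * q ^ (m + 1) = q * uF q * q ^ (m + 1) := by ring
  rw [r1] at a1
  rw [r2] at a2
  have n0 := uq_ne hq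
  have n1 : qPF (uF q * q) q (m + 1) ≠ 0 := by
    intro h; rw [h, zero_mul] at a2; exact n0 a2.symm
  rw [div_mul_eq_mul_div, div_eq_div_iff n1 n0, ← a1, ← a2, ← a3]
  ring

lemma main_sum {q : ℂ} (hq : ‖q‖ < 1 / 10) :
    ∑' m : ℕ, tT q ^ (m + 1) * gG q (q ^ (m + 1)) =
      -(q ^ 2 / (1 - q) ^ 2 +
        ∑' n : ℕ, dD q (n + 1) * q ^ (n + 3) / (1 - 2 * q + q ^ (n + 3))) := by
  have hs := small_slit hq
  have hq' := hs.1
  have h2 := two_ne hs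
  have htT : tT q * (1 - 2 * q) = -q ^ 2 := div_mul_cancel₀ _ h2
  have ht : ‖tT q‖ < 1 := by
    unfold tT
    have h3 := norm_sub_norm_le (1 : ℂ) (2 * q)
    rw [norm_one, norm_mul] at h3
    norm_num at h3
    rw [norm_div, norm_neg, norm_pow, div_lt_one (by linarith)]
    nlinarith [norm_nonneg q]
  have hz : ∀ m, ‖q ^ (m + 1)‖ ≤ 55 / 100 := by
    intro m
    rw [norm_pow, pow_succ]
    have : ‖q‖ ^ m ≤ 1 := pow_le_one₀ (norm_nonneg _) (by linarith)
    nlinarith [norm_nonneg q]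
  have hS : Summable (Function.uncurry fun (m n : ℕ) =>
      tT q ^ (m + 1) * (dD q n * (q ^ (m + 1)) ^ n)) := by
    have hg : Summable fun m : ℕ => ‖tT q‖ ^ (m + 1) :=
      (summable_nat_add_iff 1).2 (summable_geometric_of_lt_one (norm_nonneg _) ht)
    refine Summable.of_norm_bounded (hg.mul_of_nonneg summable_mM
      (fun _ => by positivity) (fun n => (mM_pos n).le)) ?_
    rintro ⟨m, n⟩
    simp only [Function.uncurry]
    rw [norm_mul, norm_pow]
    gcongr
    exact dD_term_bound hq' (hz m) n
  have e1 : ∀ m : ℕ, tT q ^ (m + 1) * gG q (q ^ (m + 1)) =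
      ∑' n, tT q ^ (m + 1) * (dD q n * (q ^ (m + 1)) ^ n) := by
    intro m
    unfold gG
    rw [tsum_mul_left]
  simp_rw [e1]
  rw [← hS.tsum_comm]
  have e2 : ∀ n : ℕ, ∑' m : ℕ, tT q ^ (m + 1) * (dD q n * (q ^ (m + 1)) ^ n) =
      -(dD q n * q ^ (n + 2) / (1 - 2 * q + q ^ (n + 2))) := by
    intro n
    have ht' : ‖tT q * q ^ n‖ < 1 := by
      rw [norm_mul, norm_pow]
      have : ‖q‖ ^ n ≤ 1 := pow_le_one₀ (norm_nonneg _) (by linarith)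
      nlinarith [norm_nonneg (tT q)]
    have e3 : ∀ m : ℕ, tT q ^ (m + 1) * (dD q n * (q ^ (m + 1)) ^ n) =
        dD q n * (tT q * q ^ n) * (tT q * q ^ n) ^ m := by
      intro m; ring
    simp_rw [e3]
    rw [tsum_mul_left, tsum_geometric_of_norm_lt_one ht']
    have e4 : 1 - tT q * q ^ n = (1 - 2 * q + q ^ (n + 2)) / (1 - 2 * q) := by
      rw [eq_div_iff h2]
      linear_combination -q ^ n * htT
    rw [e4, inv_div]
    rw [mul_div_assoc', ← neg_div]
    congr 1
    linear_combination dD q n * q ^ n * htT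
  simp_rw [e2]
  rw [tsum_neg]
  congr 1
  have hsum : Summable fun n : ℕ => dD q n * q ^ (n + 2) / (1 - 2 * q + q ^ (n + 2)) :=
    (summable_nat_add_iff 1).1 (term_summable hs).of_norm
  rw [hsum.tsum_eq_zero_add]
  congr 1
  simp only [dD, Finset.range_zero, Finset.prod_empty]
  congr 1 <;> ring

lemma fF_eq {q : ℂ} (hq : ‖q‖ < 1 / 10) : fF q = PAseries q := by
  have hs := small_slit hq
  have hq' := hs.1
  have h1 := one_sub_ne hq'
  have h2 := two_ne hs
  have hq1 : ‖q‖ < 1 := by linarith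
  unfold PAseries fF
  have e : ∀ m : ℕ, PAterm q (m + 1) = 1 / (1 - q) * (qPI (vF q * q) q / qPI (uF q * q) q) *
      (tT q ^ (m + 1) * gG q (q ^ (m + 1))) := by
    intro m
    rw [PAterm_eq hq', quot_eq hq']; ring
  simp_rw [e]
  rw [tsum_mul_left, main_sum hq]
  have hv := qPF_mul_qPI (vF q) hq1 1
  rw [pow_one] at hv
  have hp : qPF (vF q) q 1 = -q ^ 2 / (1 - q) := by
    simp [qPF, vF]
    field_simp
    ring
  rw [hp] at hv
  rw [← hv, mul_comm (uF q) q]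
  have n0 := qu_ne hq'
  generalize q ^ 2 / (1 - q) ^ 2 +
        ∑' n : ℕ, dD q (n + 1) * q ^ (n + 3) / (1 - 2 * q + q ^ (n + 3)) = X
  unfold CF AF
  field_simp
  ring

/-- `PA(q)` extends analytically to the slit disc `D₀`, where it admits the convergent
representation in terms of the coefficients `d_ν(q)`. -/
theorem PA_extends_to_slit_disc :
    ∃ f : ℂ → ℂ,
      AnalyticOnNhd ℂ f slitDisc ∧
      (∀ q : ℂ, ‖q‖ < 1 / 10 → f q = PAseries q) ∧
      ∀ q ∈ slitDisc,
        Summable (fun ν : ℕ =>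
          ‖dCoef q (ν + 1) * q ^ (ν + 3) / (1 - 2 * q + q ^ (ν + 3))‖) ∧
        f q = CF q - AF q * (qPI (vF q) q / qPI (q * uF q) q) *
          (q ^ 2 / (1 - q) ^ 2 +
            ∑' ν : ℕ, dCoef q (ν + 1) * q ^ (ν + 3) / (1 - 2 * q + q ^ (ν + 3))) := by
  refine ⟨fF, fF_diff.analyticOnNhd slit_open, fun q hq => fF_eq hq, fun q hq => ?_⟩
  have h := dCoef_eq hq.1
  simp_rw [h]
  exact ⟨term_summable hq, rfl⟩
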